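/- arXiv:1909.07762 — 2 statements merged into one kernel-verified Lean document; each statement's English description precedes it below -/
import Mathlib

section
/- Let c = 2π√(5/12). There exists a constant C > 0 such that for all positive integers m, n with m ≤ n, π(m,n) ≤ C · e^{c√m}. -/
open Finset

/-- A pair of sequences of parts is *steadily decreasing* if
`min (a i) (b i) ≥ max (a (i+1)) (b (i+1))` for all `i`. -/
noncomputable def SteadilyDecreasing (a b : ℕ → ℕ) : Prop :=
  ∀ i, max (a (i + 1)) (b (i + 1)) ≤ min (a i) (b i)

/-- `bipartitePi m n` is the number of pairs of partitions (given as non-increasing,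
finitely supported sequences) of the bipartite number `(m, n)` with steadily
decreasing parts. -/
noncomputable def bipartitePi (m n : ℕ) : ℕ :=
  Nat.card {p : (ℕ →₀ ℕ) × (ℕ →₀ ℕ) //
    (∀ i, p.1 (i + 1) ≤ p.1 i) ∧ (∀ i, p.2 (i + 1) ≤ p.2 i) ∧
    SteadilyDecreasing p.1 p.2 ∧
    (p.1.sum fun _ x => x) = m ∧ (p.2.sum fun _ x => x) = n}

/-- The partition function `p n`. -/
noncomputable def partitionCount (n : ℕ) : ℕ := Nat.card (Nat.Partition n)

/-- The partition function extended to the integers, with `p r = 0` for `r < 0`. -/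
noncomputable def partitionCountInt (r : ℤ) : ℕ := if 0 ≤ r then partitionCount r.toNat else 0

/-- The cubic partition function `c n`, counting partitions of `n` in which even
parts come in two colors (equivalently, pairs of a partition together with a
partition into even parts, of total size `n`). -/
noncomputable def cubicPartition (n : ℕ) : ℕ :=
  Nat.card {p : Multiset ℕ × Multiset ℕ //
    (∀ i ∈ p.1, 0 < i) ∧ (∀ i ∈ p.2, 0 < i ∧ Even i) ∧ p.1.sum + p.2.sum = n}

/-- The Andrews–Garvan crank of a partition: the largest part if there are no ones,
and otherwise the number of parts larger than the number of ones minus the number of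
ones. -/
noncomputable def crank {n : ℕ} (l : n.Partition) : ℤ :=
  if l.parts.count 1 = 0 then (l.parts.sup : ℤ)
  else ((l.parts.filter fun p => l.parts.count 1 < p).card : ℤ) - l.parts.count 1

/-- `crankM m n` is the crank counting function `M(m, n)`: the number of partitions
of `n` with crank `m`, with the standard convention at `n = 1`
(`M(0,1) = -1`, `M(±1,1) = 1`, `M(m,1) = 0` otherwise). -/
noncomputable def crankM (m : ℤ) (n : ℕ) : ℤ :=
  if n = 1 then (if m = 0 then -1 else if m.natAbs = 1 then 1 else 0)
  else (Nat.card {l : n.Partition // crank l = m} : ℤ)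

/-- `alphaBip s k = Σ_{ℓ ≥ 0} (-1)^ℓ p(k - ℓ(ℓ+1)/2 - ℓ s)`. -/
noncomputable def alphaBip (s k : ℕ) : ℤ :=
  ∑' ℓ : ℕ, (-1 : ℤ) ^ ℓ *
    (partitionCountInt ((k : ℤ) - ℓ * (ℓ + 1) / 2 - ℓ * s) : ℤ)

/-- `Dbip m n = π(m,n) - π(m-1,n)`, with `π(-1,n) := 0`. -/
noncomputable def Dbip (m n : ℕ) : ℤ :=
  (bipartitePi m n : ℤ) - if m = 0 then 0 else (bipartitePi (m - 1) n : ℤ)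

/-!
Write `d i = α i - β i` and let `e i = min (α i) (β i) - max (α (i+1)) (β (i+1))` be the gaps.
Then `∑ α i = ∑ (i+1) e i + ∑ ((i+1) (d i)⁺ + i (d i)⁻)`. The parameters `e i`, `i ≥ 0`, and
`d i`, `i ≥ 1`, determine the pair, because `d 0` is fixed by the total `∑ d i = m - n`.
Dropping `d 0` and summing over all values of the other parameters gives, for `0 < x < 1`,
`π(m,n) x^m ≤ ∏_{k ≥ 1} (1 - x^k)⁻¹ (1 - x^(2k+1)) / ((1 - x^(k+1)) (1 - x^k))
  = P(x)² P(x²)`, where `P(x) = ∏_{k ≥ 1} (1 - x^k)⁻¹`.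
Since `P(e^(-t)) ≤ e^(π²/(6t))`, this gives `π(m,n) ≤ exp (m t + 5π²/(12t))`; take the best `t`.
-/

lemma card_mul_le_prod_of_hasSum {S ι β : Type*} [Fintype ι] {w : ι → β → ℝ} {c : ι → ℝ}
    (hw : ∀ i b, 0 ≤ w i b) (hc : ∀ i, HasSum (w i) (c i)) {φ : S → ι → β}
    (hφ : Function.Injective φ) {y : ℝ} (hy : ∀ s, y ≤ ∏ i, w i (φ s i)) :
    (Nat.card S : ℝ) * y ≤ ∏ i, c i := by
  classical
  rcases finite_or_infinite S with hS | hS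
  · have := Fintype.ofFinite S
    let T : ι → Finset β := fun i => univ.image fun s => φ s i
    calc (Nat.card S : ℝ) * y = ∑ _s : S, y := by simp
      _ ≤ ∑ s, ∏ i, w i (φ s i) := sum_le_sum fun s _ => hy s
      _ = ∑ f ∈ univ.image φ, ∏ i, w i (f i) := by rw [sum_image hφ.injOn]
      _ ≤ ∑ f ∈ Fintype.piFinset T, ∏ i, w i (f i) := by
          refine sum_le_sum_of_subset_of_nonneg ?_ fun f _ _ => prod_nonneg fun i _ => hw i _
          exact image_subset_iff.2 fun s _ =>
            Fintype.mem_piFinset.2 fun i => mem_image_of_mem _ (mem_univ s)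
      _ = ∏ i, ∑ b ∈ T i, w i b := (prod_univ_sum T w).symm
      _ ≤ ∏ i, c i := prod_le_prod (fun i _ => sum_nonneg fun b _ => hw i b)
          fun i _ => sum_le_hasSum _ (fun b _ => hw i b) (hc i)
  · -- The junk value `Nat.card S = 0`; in fact this case only arises for `y ≤ 0`.
    rw [Nat.card_eq_zero_of_infinite, Nat.cast_zero, zero_mul]
    exact prod_nonneg fun i _ => (hc i).nonneg (hw i)

lemma sum_range_eq_finsuppSum {p : ℕ →₀ ℕ} {K : ℕ} (hp : ∀ i, K ≤ i → p i = 0) :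
    ∑ i ∈ range K, p i = p.sum fun _ x => x := by
  have h_support : p.support ⊆ range K := fun i hi =>
    mem_range.2 (lt_of_not_ge fun hKi => Finsupp.mem_support_iff.1 hi (hp i hKi))
  rw [Finsupp.sum_of_support_subset p h_support _ (by simp)]

lemma sum_range_le_finsuppSum (p : ℕ →₀ ℕ) (K : ℕ) :
    ∑ i ∈ range K, p i ≤ p.sum fun _ x => x := by
  rw [Finsupp.sum_of_support_subset p (subset_union_left (s₂ := range K)) _ (by simp)]
  exact sum_le_sum_of_subset subset_union_right

lemma eq_zero_of_antitone_of_finsuppSum_le {p : ℕ →₀ ℕ} (hp : Antitone p) {i : ℕ}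
    (hi : (p.sum fun _ x => x) ≤ i) : p i = 0 := by
  have h_lower : (i + 1) * p i ≤ ∑ j ∈ range (i + 1), p j := by
    simpa using card_nsmul_le_sum (range (i + 1)) p (p i)
      fun j hj => hp (mem_range_succ_iff.1 hj)
  have h_upper := sum_range_le_finsuppSum p (i + 1)
  by_contra h_ne
  nlinarith [Nat.pos_of_ne_zero h_ne]

namespace SteadilyDecreasing

/-- The gap `min (a i) (b i) - max (a (i + 1)) (b (i + 1))`; the subtraction does not truncate on
steadily decreasing pairs. -/
def gap (a b : ℕ → ℕ) (i : ℕ) : ℕ := min (a i) (b i) - max (a (i + 1)) (b (i + 1))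

/-- The `i`-th coordinate of a pair of sequences: its `i`-th gap and its `(i + 1)`-st difference.
The difference at `0` is left out, being determined by the totals of the two sequences. -/
def coord (a b : ℕ → ℕ) (i : ℕ) : ℕ × ℤ := (gap a b i, (a (i + 1) : ℤ) - b (i + 1))

/-- The contribution of an `i`-th coordinate `q` to the sum of the first sequence. -/
def coordWeight (i : ℕ) (q : ℕ × ℤ) : ℕ :=
  (i + 1) * q.1 + ((i + 2) * q.2.toNat + (i + 1) * (-q.2).toNat)

variable {a b a' b' : ℕ → ℕ}

lemma antitone_left (h : SteadilyDecreasing a b) : Antitone a :=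
  antitone_nat_of_succ_le fun i => (le_max_left _ _).trans ((h i).trans (min_le_left _ _))

lemma right_succ_le_left (h : SteadilyDecreasing a b) (i : ℕ) : b (i + 1) ≤ a i :=
  (le_max_right _ _).trans ((h i).trans (min_le_left _ _))

lemma gap_add_eq_left (h : SteadilyDecreasing a b) (i : ℕ) :
    gap a b i + (b (i + 1) - a (i + 1)) + a (i + 1) + (a i - b i) = a i := by
  have := h i
  unfold gap
  omega

lemma sum_coordWeight (h : SteadilyDecreasing a b) (K : ℕ) :
    ∑ i ∈ range K, coordWeight i (coord a b i) + (a 0 - b 0) + K * a K =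
      ∑ i ∈ range K, a i + (K + 1) * (a K - b K) := by
  induction K with
  | zero => simp
  | succ K ih =>
    have h_step := congrArg ((K + 1) * ·) (h.gap_add_eq_left K)
    simp only [sum_range_succ, coordWeight, coord, neg_sub, Int.toNat_sub] at ih h_step ⊢
    linarith

lemma eq_of_gap_eq (h : SteadilyDecreasing a b) (h' : SteadilyDecreasing a' b') {K : ℕ}
    (h_last : a K = a' K) (h_gap : ∀ i < K, gap a b i = gap a' b' i)
    (h_diff : ∀ i ≤ K, (a i : ℤ) - b i = a' i - b' i) {i : ℕ} (hi : i ≤ K) :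
    a i = a' i ∧ b i = b' i := by
  induction hi using Nat.decreasingInduction with
  | self => have := h_diff K le_rfl; omega
  | of_succ i hi ih =>
    have := h i
    have := h' i
    have := h_gap i hi
    have := h_diff i hi.le
    unfold gap at *
    omega

end SteadilyDecreasing

open SteadilyDecreasing

/-- The pairs of partitions counted by `bipartitePi m n`. -/
abbrev SteadyPair (m n : ℕ) : Type :=
  {p : (ℕ →₀ ℕ) × (ℕ →₀ ℕ) //
    (∀ i, p.1 (i + 1) ≤ p.1 i) ∧ (∀ i, p.2 (i + 1) ≤ p.2 i) ∧
    SteadilyDecreasing p.1 p.2 ∧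
    (p.1.sum fun _ x => x) = m ∧ (p.2.sum fun _ x => x) = n}

namespace SteadyPair

variable {m n : ℕ} (p q : SteadyPair m n)

lemma steadilyDecreasing : SteadilyDecreasing p.1.1 p.1.2 := p.2.2.2.1

lemma left_eq_zero {i : ℕ} (hi : m ≤ i) : p.1.1 i = 0 :=
  eq_zero_of_antitone_of_finsuppSum_le p.steadilyDecreasing.antitone_left
    (p.2.2.2.2.1.trans_le hi)

lemma right_eq_zero {i : ℕ} (hi : m < i) : p.1.2 i = 0 := by
  obtain ⟨k, rfl⟩ := Nat.exists_eq_add_one_of_ne_zero (Nat.ne_zero_of_lt hi)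
  have := p.steadilyDecreasing.right_succ_le_left k
  rwa [p.left_eq_zero (Nat.lt_succ_iff.1 hi), Nat.le_zero] at this

lemma sum_left : ∑ i ∈ range m, p.1.1 i = m :=
  (sum_range_eq_finsuppSum fun _ => p.left_eq_zero).trans p.2.2.2.2.1

lemma sum_right : ∑ i ∈ range (m + 1), p.1.2 i = n :=
  (sum_range_eq_finsuppSum fun _ => p.right_eq_zero).trans p.2.2.2.2.2

/-- The coordinates of a pair; all later ones vanish, since `α` has at most `m` parts and `β` at
most `m + 1`. -/
def coords (i : Fin m) : ℕ × ℤ := coord p.1.1 p.1.2 i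

lemma sum_coordWeight_coords_le : ∑ i : Fin m, coordWeight i (p.coords i) ≤ m := by
  have h_sum := p.steadilyDecreasing.sum_coordWeight m
  rw [p.left_eq_zero le_rfl, p.sum_left, Nat.zero_sub, mul_zero] at h_sum
  unfold coords
  rw [Fin.sum_univ_eq_sum_range (fun i => coordWeight i (coord p.1.1 p.1.2 i))]
  omega

lemma sum_sub : ∑ i ∈ range m, ((p.1.1 (i + 1) : ℤ) - p.1.2 (i + 1)) +
    ((p.1.1 0 : ℤ) - p.1.2 0) = m - n := by
  rw [← sum_range_succ' fun i => (p.1.1 i : ℤ) - p.1.2 i, sum_sub_distrib, sum_range_succ,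
    p.left_eq_zero le_rfl, ← Nat.cast_sum, ← Nat.cast_sum, p.sum_left, p.sum_right]
  simp

variable {p q}

lemma sub_eq_of_coords_eq (h : p.coords = q.coords) {i : ℕ} (hi : i ≤ m) :
    (p.1.1 i : ℤ) - p.1.2 i = q.1.1 i - q.1.2 i := by
  have h_succ : ∀ j < m, (p.1.1 (j + 1) : ℤ) - p.1.2 (j + 1) = q.1.1 (j + 1) - q.1.2 (j + 1) :=
    fun j hj => congrArg Prod.snd (congrFun h ⟨j, hj⟩)
  cases i with
  | succ j => exact h_succ j hi
  | zero =>
    have h_sum := sum_congr rfl fun j hj => h_succ j (mem_range.1 hj)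
    linarith [p.sum_sub, q.sum_sub]

lemma coords_injective : Function.Injective (coords : SteadyPair m n → Fin m → ℕ × ℤ) := by
  intro p q h
  have h_le : ∀ i ≤ m, p.1.1 i = q.1.1 i ∧ p.1.2 i = q.1.2 i := fun i =>
    p.steadilyDecreasing.eq_of_gap_eq q.steadilyDecreasing
      ((p.left_eq_zero le_rfl).trans (q.left_eq_zero le_rfl).symm)
      (fun j hj => congrArg Prod.fst (congrFun h ⟨j, hj⟩)) (fun j => sub_eq_of_coords_eq h)
  have h_all : ∀ i, p.1.1 i = q.1.1 i ∧ p.1.2 i = q.1.2 i := fun i => by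
    rcases le_or_gt i m with hi | hi
    · exact h_le i hi
    · exact ⟨(p.left_eq_zero hi.le).trans (q.left_eq_zero hi.le).symm,
        (p.right_eq_zero hi).trans (q.right_eq_zero hi).symm⟩
  exact Subtype.ext (Prod.ext (Finsupp.ext fun i => (h_all i).1) (Finsupp.ext fun i => (h_all i).2))

end SteadyPair

section GeneratingFunction

lemma hasSum_int_geometric {r s : ℝ} (hr₀ : 0 ≤ r) (hr₁ : r < 1) (hs₀ : 0 ≤ s) (hs₁ : s < 1) :
    HasSum (fun d : ℤ => r ^ d.toNat * s ^ (-d).toNat) ((1 - r * s) * (1 - r)⁻¹ * (1 - s)⁻¹) := by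
  have h_value : (1 - r * s) * (1 - r)⁻¹ * (1 - s)⁻¹ = (1 - r)⁻¹ + s * (1 - s)⁻¹ := by
    have : 1 - r ≠ 0 := (sub_pos.2 hr₁).ne'
    have : 1 - s ≠ 0 := (sub_pos.2 hs₁).ne'
    field_simp
    ring
  rw [h_value]
  refine HasSum.of_nat_of_neg_add_one ?_ ?_
  · simpa using hasSum_geometric_of_lt_one hr₀ hr₁
  · have h_toNat (k : ℕ) : (-((k : ℤ) + 1)).toNat = 0 := by lia
    simpa [h_toNat, -neg_add_rev, pow_succ'] using (hasSum_geometric_of_lt_one hs₀ hs₁).mul_left s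

variable {x : ℝ}

/-- The generating function `∑ x ^ coordWeight i q` of the `i`-th coordinate. -/
noncomputable def coordFactor (x : ℝ) (i : ℕ) : ℝ :=
  (1 - x ^ (i + 1))⁻¹ * ((1 - x ^ (2 * i + 3)) * (1 - x ^ (i + 2))⁻¹ * (1 - x ^ (i + 1))⁻¹)

lemma hasSum_pow_coordWeight (hx₀ : 0 ≤ x) (hx₁ : x < 1) (i : ℕ) :
    HasSum (fun q => x ^ coordWeight i q) (coordFactor x i) := by
  have h_lt : ∀ k : ℕ, x ^ (k + 1) < 1 := fun k => pow_lt_one₀ hx₀ hx₁ k.succ_ne_zero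
  have h_gap := hasSum_geometric_of_lt_one (pow_nonneg hx₀ (i + 1)) (h_lt i)
  have h_diff := hasSum_int_geometric (pow_nonneg hx₀ (i + 2)) (h_lt (i + 1))
    (pow_nonneg hx₀ (i + 1)) (h_lt i)
  rw [← pow_add, show i + 2 + (i + 1) = 2 * i + 3 by ring] at h_diff
  have h_summable := h_gap.summable.mul_of_nonneg h_diff.summable
    (fun _ => by positivity) (fun _ => by positivity)
  simpa only [coordWeight, coordFactor, pow_add, pow_mul] using h_gap.mul h_diff h_summable

lemma bipartitePi_mul_pow_le (m n : ℕ) (hx₀ : 0 ≤ x) (hx₁ : x < 1) :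
    (bipartitePi m n : ℝ) * x ^ m ≤ ∏ i ∈ range m, coordFactor x i := by
  rw [← Fin.prod_univ_eq_prod_range]
  refine card_mul_le_prod_of_hasSum (S := SteadyPair m n) (ι := Fin m)
    (fun _ _ => pow_nonneg hx₀ _) (fun i => hasSum_pow_coordWeight hx₀ hx₁ i)
    SteadyPair.coords_injective fun p => ?_
  rw [prod_pow_eq_pow_sum]
  exact pow_le_pow_of_le_one hx₀ hx₁.le p.sum_coordWeight_coords_le

end GeneratingFunction

section EulerProduct

/-- The truncated Euler product `∏_{1 ≤ k ≤ K} (1 - x ^ k)⁻¹`, the generating function of the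
partitions into parts of size at most `K`. -/
noncomputable def eulerProd (K : ℕ) (x : ℝ) : ℝ := ∏ i ∈ range K, (1 - x ^ (i + 1))⁻¹

variable {x : ℝ}

lemma one_sub_pow_succ_pos (hx₀ : 0 ≤ x) (hx₁ : x < 1) (k : ℕ) : 0 < 1 - x ^ (k + 1) :=
  sub_pos.2 (pow_lt_one₀ hx₀ hx₁ k.succ_ne_zero)

lemma eulerProd_pos (hx₀ : 0 ≤ x) (hx₁ : x < 1) (K : ℕ) : 0 < eulerProd K x :=
  prod_pos fun i _ => inv_pos.2 (one_sub_pow_succ_pos hx₀ hx₁ i)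

lemma eulerProd_mono (hx₀ : 0 ≤ x) (hx₁ : x < 1) : Monotone (eulerProd · x) :=
  monotone_nat_of_le_succ fun K => by
    simp only [eulerProd, prod_range_succ _ K]
    refine le_mul_of_one_le_right (eulerProd_pos hx₀ hx₁ K).le ?_
    exact (one_le_inv₀ (one_sub_pow_succ_pos hx₀ hx₁ K)).2 (sub_le_self 1 (by positivity))

lemma eulerProd_two_mul_mul_prod_odd (hx₀ : 0 ≤ x) (hx₁ : x < 1) (K : ℕ) :
    eulerProd (2 * K) x * ∏ i ∈ range K, (1 - x ^ (2 * i + 1)) = eulerProd K (x ^ 2) := by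
  induction K with
  | zero => simp [eulerProd]
  | succ K ih =>
    have h_ne := (one_sub_pow_succ_pos hx₀ hx₁ (2 * K)).ne'
    simp only [eulerProd, mul_add_one, prod_range_succ, ← pow_mul] at ih ⊢
    rw [← ih]
    field_simp

lemma eulerProd_mul_prod_odd_le (hx₀ : 0 ≤ x) (hx₁ : x < 1) (K : ℕ) :
    eulerProd K x * ∏ i ∈ range K, (1 - x ^ (2 * i + 1)) ≤ eulerProd K (x ^ 2) := by
  rw [← eulerProd_two_mul_mul_prod_odd hx₀ hx₁]
  exact mul_le_mul_of_nonneg_right (eulerProd_mono hx₀ hx₁ (by lia))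
    (prod_nonneg fun i _ => (one_sub_pow_succ_pos hx₀ hx₁ (2 * i)).le)

lemma prod_coordFactor_le (hx₀ : 0 ≤ x) (hx₁ : x < 1) (m : ℕ) :
    ∏ i ∈ range m, coordFactor x i ≤ eulerProd m x ^ 2 * eulerProd (m + 1) (x ^ 2) := by
  have h_eq : ∏ i ∈ range m, coordFactor x i = eulerProd m x ^ 2 *
      (eulerProd (m + 1) x * ∏ i ∈ range (m + 1), (1 - x ^ (2 * i + 1))) := by
    have : 1 - x ≠ 0 := (sub_pos.2 hx₁).ne'
    simp only [coordFactor, eulerProd, prod_mul_distrib, prod_range_succ' _ m, mul_add_one,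
      add_assoc, Nat.reduceAdd, mul_zero, zero_add, pow_one]
    field_simp
  rw [h_eq]
  exact mul_le_mul_of_nonneg_left (eulerProd_mul_prod_odd_le hx₀ hx₁ _) (sq_nonneg _)

lemma sum_range_exp_neg_pow_succ_le {u : ℝ} (hu : 0 < u) (K : ℕ) :
    ∑ i ∈ range K, Real.exp (-u) ^ (i + 1) ≤ 1 / u := by
  have h_lt : Real.exp (-u) < 1 := Real.exp_lt_one_iff.2 (neg_lt_zero.2 hu)
  calc ∑ i ∈ range K, Real.exp (-u) ^ (i + 1)
      ≤ Real.exp (-u) * (1 - Real.exp (-u))⁻¹ := by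
        simp only [pow_succ']
        exact sum_le_hasSum _ (fun _ _ => by positivity)
          ((hasSum_geometric_of_lt_one (Real.exp_pos _).le h_lt).mul_left _)
    _ = 1 / (Real.exp u - 1) := by
        have : Real.exp u - 1 ≠ 0 := (sub_pos.2 (Real.one_lt_exp_iff.2 hu)).ne'
        rw [Real.exp_neg]
        field_simp
    _ ≤ 1 / u := one_div_le_one_div_of_le hu (by linarith [Real.add_one_le_exp u])

lemma hasSum_one_div_succ_sq : HasSum (fun k : ℕ => 1 / ((k : ℝ) + 1) ^ 2) (Real.pi ^ 2 / 6) := by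
  simpa using (hasSum_nat_add_iff' 1).2 hasSum_zeta_two

lemma eulerProd_exp_neg_le (K : ℕ) {t : ℝ} (ht : 0 < t) :
    eulerProd K (Real.exp (-t)) ≤ Real.exp (Real.pi ^ 2 / 6 / t) := by
  set x := Real.exp (-t) with hx
  have hx₀ : 0 ≤ x := (Real.exp_pos _).le
  have hx₁ : x < 1 := Real.exp_lt_one_iff.2 (neg_lt_zero.2 ht)
  have h_log : HasSum (fun k : ℕ => ∑ i ∈ range K, (x ^ (i + 1)) ^ (k + 1) / ((k : ℝ) + 1))
      (∑ i ∈ range K, -Real.log (1 - x ^ (i + 1))) := by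
    refine hasSum_sum fun i _ => Real.hasSum_pow_div_log_of_abs_lt_one ?_
    rw [abs_of_nonneg (by positivity)]
    exact pow_lt_one₀ hx₀ hx₁ i.succ_ne_zero
  rw [← Real.log_le_iff_le_exp (eulerProd_pos hx₀ hx₁ K), eulerProd,
    Real.log_prod fun i _ => (inv_pos.2 (one_sub_pow_succ_pos hx₀ hx₁ i)).ne']
  simp only [Real.log_inv]
  refine hasSum_le (fun k => ?_) h_log (hasSum_one_div_succ_sq.div_const t)
  have h_pow : ∀ i, (x ^ (i + 1)) ^ (k + 1) = Real.exp (-((k + 1) * t)) ^ (i + 1) := fun i => by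
    rw [pow_right_comm, hx, ← Real.exp_nat_mul (-t)]
    push_cast
    ring_nf
  calc ∑ i ∈ range K, (x ^ (i + 1)) ^ (k + 1) / ((k : ℝ) + 1)
      = (∑ i ∈ range K, Real.exp (-((k + 1) * t)) ^ (i + 1)) / ((k : ℝ) + 1) := by
        simp only [h_pow, sum_div]
    _ ≤ 1 / ((k + 1) * t) / ((k : ℝ) + 1) := by
        gcongr
        exact sum_range_exp_neg_pow_succ_le (by positivity) K
    _ = 1 / ((k : ℝ) + 1) ^ 2 / t := by field_simp

end EulerProduct

lemma bipartitePi_le_exp (m n : ℕ) {t : ℝ} (ht : 0 < t) :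
    (bipartitePi m n : ℝ) ≤ Real.exp (m * t + 5 * Real.pi ^ 2 / 12 / t) := by
  set x := Real.exp (-t) with hx
  have hx₀ : 0 ≤ x := (Real.exp_pos _).le
  have hx₁ : x < 1 := Real.exp_lt_one_iff.2 (neg_lt_zero.2 ht)
  have h_sq : x ^ 2 = Real.exp (-(2 * t)) := by
    rw [hx, ← Real.exp_nat_mul]
    push_cast
    ring_nf
  have h_pow : x ^ m * Real.exp (m * t) = 1 := by
    rw [hx, ← Real.exp_nat_mul, ← Real.exp_add, mul_neg, neg_add_cancel, Real.exp_zero]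
  calc (bipartitePi m n : ℝ) = bipartitePi m n * x ^ m * Real.exp (m * t) := by
        rw [mul_assoc, h_pow, mul_one]
    _ ≤ eulerProd m x ^ 2 * eulerProd (m + 1) (x ^ 2) * Real.exp (m * t) := by
        gcongr ?_ * _
        exact (bipartitePi_mul_pow_le m n hx₀ hx₁).trans (prod_coordFactor_le hx₀ hx₁ m)
    _ ≤ Real.exp (Real.pi ^ 2 / 6 / t) ^ 2 * Real.exp (Real.pi ^ 2 / 6 / (2 * t)) *
          Real.exp (m * t) := by
        have h_nonneg := (eulerProd_pos hx₀ hx₁ m).le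
        rw [h_sq]
        gcongr
        · exact (eulerProd_pos (by positivity) (Real.exp_lt_one_iff.2 (by linarith)) _).le
        · exact eulerProd_exp_neg_le m ht
        · exact eulerProd_exp_neg_le (m + 1) (by positivity)
    _ = Real.exp (m * t + 5 * Real.pi ^ 2 / 12 / t) := by
        rw [← Real.exp_nat_mul, ← Real.exp_add, ← Real.exp_add]
        congr 1
        field_simp
        ring

lemma le_exp_two_mul_sqrt_mul_sqrt {y a b : ℝ} (ha : 0 ≤ a) (hb : 0 < b)
    (hy : ∀ t > 0, y ≤ Real.exp (a * t + b / t)) : y ≤ Real.exp (2 * √b * √a) := by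
  rcases ha.eq_or_lt with rfl | ha
  · have h_lim : Filter.Tendsto (fun t => Real.exp (b / t)) Filter.atTop (nhds (Real.exp 0)) :=
      (Real.continuous_exp.tendsto 0).comp (Filter.tendsto_id.const_div_atTop b)
    rw [Real.sqrt_zero, mul_zero]
    refine ge_of_tendsto h_lim ?_
    filter_upwards [Filter.eventually_gt_atTop 0] with t ht
    simpa using hy t ht
  · have ha' := Real.sqrt_pos.2 ha
    have hb' := Real.sqrt_pos.2 hb
    convert hy (√b / √a) (div_pos hb' ha') using 2
    nth_rw 2 [← Real.sq_sqrt ha.le]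
    nth_rw 3 [← Real.sq_sqrt hb.le]
    field_simp
    ring

theorem bipartitePi_upper_bound_general (m n : ℕ) :
    (bipartitePi m n : ℝ) ≤ Real.exp (2 * Real.pi * √(5 / 12) * √m) := by
  have h_sqrt : √(5 * Real.pi ^ 2 / 12) = Real.pi * √(5 / 12) := by
    rw [mul_div_right_comm, Real.sqrt_mul' _ (sq_nonneg _), Real.sqrt_sq Real.pi_pos.le, mul_comm]
  have h := le_exp_two_mul_sqrt_mul_sqrt m.cast_nonneg (by positivity)
    fun t ht => bipartitePi_le_exp m n ht
  rwa [h_sqrt, ← mul_assoc] at h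

/-- there is `C > 0` with `π(m,n) ≤ C·e^{c√m}` for all positive
integers `m ≤ n`, where `c = 2π√(5/12)`. -/
theorem bipartitePi_upper_bound (c : ℝ) (hc : c = 2 * Real.pi * Real.sqrt (5 / 12)) :
    ∃ C > (0 : ℝ), ∀ m n : ℕ, 0 < m → 0 < n → m ≤ n →
      (bipartitePi m n : ℝ) ≤ C * Real.exp (c * Real.sqrt m) := by
  exact ⟨1, one_pos, fun m n _ _ _ => by
    simpa only [one_mul, hc] using bipartitePi_upper_bound_general m n⟩
end

section
/- For all integers m ≥ n ≥ 0, π(m,n) = Σ_{0 ≤ k ≤ n} c(n − k) · α(m − n, k), where α(s,k) = Σ_{ℓ ≥ 0} (−1)^ℓ p(k − ℓ(ℓ+1)/2 − ℓs) and p(r) := 0 for all r < 0. -/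
open Finset

/-!
Fix `s = m - n` and compare generating series in `n`. Let `P`, `O`, `E` be the series of partitions
into arbitrary, odd and even parts, so that `P = O * E` and `P * E` is the series of `c`.

A steadily decreasing pair `(a, b)` is determined by the gaps `min aᵢ bᵢ - max aᵢ₊₁ bᵢ₊₁` and the
truncated differences `x = a - b`, `y = b - a`. Reading the gaps as multiplicities of the parts
`i + 1` gives `Π s = P * D s`, where `D s` counts the pairs `(x, y)` with disjoint supports and
`∑ xᵢ = ∑ yᵢ + s` by the weight `∑ i xᵢ + ∑ (i + 1) yᵢ`. Dropping disjointness amounts to adding a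
common sequence to `x` and `y`, in which index `i` contributes `i + (i + 1)`. Hence all pairs with
`∑ xᵢ = ∑ yᵢ + s` have the series `U s = O * D s`, and `Π s = E * U s`.

In a pair counted by `U s`, the entry `x₀` is forced by the other entries, which are subject to a
single inequality between lengths. The pairs of partitions violating this inequality are counted
by `X ^ (s + 1) * U (s + 1)`, so `U s + X ^ (s + 1) * U (s + 1) = P * P`. The series `A s` of
`α(s, ·)` satisfies the same recurrence with right-hand side `P`. Since such a recurrence has only
one solution, `U s = P * A s`, and therefore `Π s = E * P * A s`.
-/

namespace BipartitePartition

open PowerSeries Finsupp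

section CountingSeries

variable {ι κ : Type*}

/-- The weight function `w` takes each value finitely often, so that the elements of `ι` can be
counted by weight. -/
def FiniteFibers (w : ι → ℕ) : Prop := ∀ n, Finite {x // w x = n}

/-- The generating series `∑ₓ X ^ w x` of a weight function `w`. An infinite fiber contributes the
junk coefficient `0`. -/
noncomputable def countingSeries (w : ι → ℕ) : ℤ⟦X⟧ :=
  PowerSeries.mk fun n => (Nat.card {x // w x = n} : ℤ)

theorem FiniteFibers.of_injective_of_le {w : ι → ℕ} {v : κ → ℕ} (hv : FiniteFibers v) {f : ι → κ}
    (hf : f.Injective) {B : ℕ → ℕ} (h : ∀ x, v (f x) ≤ B (w x)) : FiniteFibers w := by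
  intro n
  have hfin : (⋃ k ∈ Set.Iic (B n), {y | v y = k}).Finite :=
    (Set.finite_Iic _).biUnion fun k _ => @Set.toFinite _ _ (hv k)
  refine (hfin.preimage hf.injOn).subset ?_
  rintro x rfl
  simpa using h x

/-- A pair has total weight `n` precisely when its two weights form a point of the antidiagonal of
`n`. -/
def fiberProdEquiv (w : ι → ℕ) (v : κ → ℕ) (n : ℕ) :
    {p : ι × κ // w p.1 + v p.2 = n} ≃
      Σ ij : antidiagonal n, {x // w x = ij.1.1} × {y // v y = ij.1.2} where
  toFun p := ⟨⟨(w p.1.1, v p.1.2), mem_antidiagonal.2 p.2⟩, ⟨p.1.1, rfl⟩, ⟨p.1.2, rfl⟩⟩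
  invFun q := ⟨(q.2.1, q.2.2), by rw [q.2.1.2, q.2.2.2, mem_antidiagonal.1 q.1.2]⟩
  left_inv _ := rfl
  right_inv := by
    rintro ⟨⟨⟨i, j⟩, _⟩, ⟨x, hx⟩, ⟨y, hy⟩⟩
    obtain rfl : w x = i := hx
    obtain rfl : v y = j := hy
    rfl

theorem FiniteFibers.prod {w : ι → ℕ} {v : κ → ℕ} (hw : FiniteFibers w) (hv : FiniteFibers v) :
    FiniteFibers fun p : ι × κ => w p.1 + v p.2 := by
  intro n
  have (i : ℕ) := hw i
  have (j : ℕ) := hv j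
  exact Finite.of_equiv _ (fiberProdEquiv w v n).symm

theorem FiniteFibers.subtype {w : ι → ℕ} (hw : FiniteFibers w) (p : ι → Prop) :
    FiniteFibers fun x : {x // p x} => w x :=
  hw.of_injective_of_le Subtype.val_injective (B := id) fun _ => le_rfl

theorem countingSeries_eq_of_bijective {w : ι → ℕ} {v : κ → ℕ} {f : ι → κ} (hf : f.Bijective)
    (h : ∀ x, v (f x) = w x) : countingSeries w = countingSeries v := by
  ext n
  simp only [countingSeries, coeff_mk]
  exact congrArg _ (Nat.card_congr
    ((Equiv.ofBijective f hf).subtypeEquiv fun x => by simp [h]))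

theorem countingSeries_add_const (w : ι → ℕ) (k : ℕ) :
    countingSeries (fun x => w x + k) = X ^ k * countingSeries w := by
  ext n
  rw [coeff_X_pow_mul']
  simp only [countingSeries, coeff_mk]
  split_ifs with h
  · exact congrArg _ (Nat.card_congr (Equiv.subtypeEquivRight fun x => by omega))
  · have : IsEmpty {x // w x + k = n} := ⟨fun x => by have := x.2; omega⟩
    simp

theorem countingSeries_subtype_add_subtype_not {w : ι → ℕ} (hw : FiniteFibers w) (p : ι → Prop) :
    countingSeries (fun x : {x // p x} => w x) + countingSeries (fun x : {x // ¬ p x} => w x) =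
      countingSeries w := by
  classical
  ext n
  have := hw.subtype p n
  have := hw.subtype (¬ p ·) n
  simp only [countingSeries, coeff_mk, map_add]
  rw [← Nat.cast_add, ← Nat.card_sum]
  refine congrArg _ (Nat.card_congr ?_)
  exact (Equiv.subtypeSum (p := fun x => w (Equiv.sumCompl p x) = n)).symm.trans
    ((Equiv.sumCompl p).subtypeEquiv fun _ => Iff.rfl)

theorem countingSeries_prod {w : ι → ℕ} {v : κ → ℕ} (hw : FiniteFibers w) (hv : FiniteFibers v) :
    countingSeries (fun p : ι × κ => w p.1 + v p.2) = countingSeries w * countingSeries v := by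
  ext n
  have (i : ℕ) := hw i
  have (j : ℕ) := hv j
  simp only [coeff_mul, countingSeries, coeff_mk]
  rw [Nat.card_congr (fiberProdEquiv w v n), Nat.card_sigma,
    ← Finset.sum_coe_sort (antidiagonal n)]
  simp only [Nat.card_prod, Nat.cast_sum, Nat.cast_mul]

end CountingSeries

section PartitionSeries

variable {ι κ : Type*}

/-- The generating series `∏ᵢ 1 / (1 - X ^ w i)` of partitions into parts indexed by `ι`, where a
part of index `i` has size `w i`. A partition is encoded by its sequence `f : ι →₀ ℕ` of
multiplicities, so that its size is `Finsupp.weight w f` and its length is `Finsupp.degree f`. -/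
noncomputable def partitionSeries (w : ι → ℕ) : ℤ⟦X⟧ :=
  countingSeries fun f : ι →₀ ℕ => weight w f

theorem finiteFibers_weight {w : ℕ → ℕ} (hw : ∀ i, i < w i) :
    FiniteFibers fun f : ℕ →₀ ℕ => weight w f := by
  intro n
  refine (Set.finite_Iic (Finsupp.indicator (Finset.range n) fun _ _ => n)).subset ?_
  rintro f rfl i
  by_cases hi : f i = 0
  · simp [hi]
  have hlt : i < weight w f := (hw i).trans_le (le_weight_of_ne_zero' w hi)
  have hle : f i ≤ weight w f := le_weight w (hw i).ne_bot f
  simpa [Finsupp.indicator_apply, hlt] using hle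

theorem finiteFibers_weight_succ : FiniteFibers fun f : ℕ →₀ ℕ => weight Nat.succ f :=
  finiteFibers_weight Nat.lt_succ_self

theorem weight_sumElim (w : ι → ℕ) (v : κ → ℕ) (f : ι →₀ ℕ) (g : κ →₀ ℕ) :
    weight (Sum.elim w v) (f.sumElim g) = weight w f + weight v g := by
  simp only [weight_apply, Finsupp.sum_sumElim, Function.comp_def, Sum.elim_inl, Sum.elim_inr]

theorem partitionSeries_sumElim {w : ι → ℕ} {v : κ → ℕ}
    (hw : FiniteFibers fun f : ι →₀ ℕ => weight w f)
    (hv : FiniteFibers fun f : κ →₀ ℕ => weight v f) :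
    partitionSeries (Sum.elim w v) = partitionSeries w * partitionSeries v := by
  rw [partitionSeries, partitionSeries, partitionSeries, ← countingSeries_prod hw hv]
  exact (countingSeries_eq_of_bijective sumFinsuppEquivProdFinsupp.symm.bijective
    fun p => weight_sumElim w v p.1 p.2).symm

theorem partitionSeries_comp_equiv (w : κ → ℕ) (e : ι ≃ κ) :
    partitionSeries (w ∘ e) = partitionSeries w :=
  countingSeries_eq_of_bijective (Finsupp.domCongr e).bijective fun f =>
    linearCombination_equivMapDomain ℕ e f

/-- A multiset with entries in the range of `w` is the multiset of parts of a unique partition into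
parts of sizes `w i`. The range of `w` is given as a predicate `p`. -/
noncomputable def multisetEquiv {w : ι → ℕ} (hw : w.Injective) {p : ℕ → Prop}
    (hp : ∀ n, p n ↔ n ∈ Set.range w) : (ι →₀ ℕ) ≃ {m : Multiset ℕ // ∀ n ∈ m, p n} :=
  have hmem (f : ι →₀ ℕ) : ∀ n ∈ (toMultiset f).map w, p n := fun n hn =>
    have ⟨i, _, hi⟩ := Multiset.mem_map.1 hn
    (hp n).2 ⟨i, hi⟩
  Equiv.ofBijective (fun f => ⟨(toMultiset f).map w, hmem f⟩) <| by
    classical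
    refine ⟨fun f g hfg => ?_, fun ⟨m, hm⟩ => ?_⟩
    · exact Multiset.toFinsupp.symm.injective
        (Multiset.map_injective hw (congrArg Subtype.val hfg))
    · have : CanLift ℕ ι w p := ⟨fun n hn => (hp n).1 hn⟩
      lift m to Multiset ι using hm
      exact ⟨m.toFinsupp, Subtype.ext (by simp)⟩

theorem sum_multisetEquiv {w : ι → ℕ} (hw : w.Injective) {p : ℕ → Prop}
    (hp : ∀ n, p n ↔ n ∈ Set.range w) (f : ι →₀ ℕ) :
    (multisetEquiv hw hp f).1.sum = weight w f := by
  change ((toMultiset f).map w).sum = weight w f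
  induction f using Finsupp.induction_linear with
  | zero => simp
  | add f g hf hg => simp [hf, hg]
  | single i n => simp [Multiset.map_nsmul, Multiset.sum_nsmul, weight_single]

theorem pos_iff_mem_range_succ (n : ℕ) : 0 < n ↔ n ∈ Set.range Nat.succ := by
  simp [Nat.pos_iff_ne_zero]

theorem injective_two_mul_succ : Function.Injective fun i : ℕ => 2 * (i + 1) :=
  fun i j hij => by simpa using hij

theorem pos_and_even_iff_mem_range (n : ℕ) :
    0 < n ∧ Even n ↔ n ∈ Set.range fun i : ℕ => 2 * (i + 1) := by
  constructor
  · rintro ⟨hpos, k, rfl⟩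
    exact ⟨k - 1, by grind⟩
  · rintro ⟨i, rfl⟩
    exact ⟨by positivity, even_two_mul _⟩

theorem mk_partitionCount :
    PowerSeries.mk (fun n => (partitionCount n : ℤ)) = partitionSeries Nat.succ := by
  rw [partitionSeries, countingSeries_eq_of_bijective
    (multisetEquiv Nat.succ_injective pos_iff_mem_range_succ).bijective (v := fun m => m.1.sum)
    (sum_multisetEquiv _ pos_iff_mem_range_succ)]
  ext n
  simp only [coeff_mk, countingSeries, partitionCount]
  exact congrArg _ (Nat.card_congr
    { toFun l := ⟨⟨l.parts, fun _ => l.parts_pos⟩, l.parts_sum⟩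
      invFun m := ⟨m.1.1, fun h => m.1.2 _ h, m.2⟩ })

theorem mk_cubicPartition :
    PowerSeries.mk (fun n => (cubicPartition n : ℤ)) =
      partitionSeries Nat.succ * partitionSeries fun i => 2 * (i + 1) := by
  let partsEquiv := multisetEquiv Nat.succ_injective pos_iff_mem_range_succ
  let evenPartsEquiv := multisetEquiv injective_two_mul_succ pos_and_even_iff_mem_range
  rw [partitionSeries, partitionSeries,
    ← countingSeries_prod finiteFibers_weight_succ (finiteFibers_weight (by grind)),
    countingSeries_eq_of_bijective (partsEquiv.prodCongr evenPartsEquiv).bijective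
      (v := fun q => q.1.1.sum + q.2.1.sum) fun p =>
        congrArg₂ (· + ·) (sum_multisetEquiv _ _ p.1) (sum_multisetEquiv _ _ p.2)]
  ext n
  simp only [coeff_mk, countingSeries, cubicPartition]
  exact congrArg _ (Nat.card_congr
    { toFun p := ⟨(⟨p.1.1, p.2.1⟩, ⟨p.1.2, p.2.2.1⟩), p.2.2.2⟩
      invFun q := ⟨(q.1.1, q.1.2), q.1.1.2, q.1.2.2, q.2⟩ })

theorem partitionSeries_succ :
    partitionSeries Nat.succ =
      partitionSeries (fun i => 2 * i + 1) * partitionSeries fun i => 2 * (i + 1) := by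
  rw [← partitionSeries_sumElim (finiteFibers_weight (by grind)) (finiteFibers_weight (by grind)),
    ← partitionSeries_comp_equiv _ Equiv.natSumNatEquivNat]
  congr 1
  ext (i | i) <;> simp [mul_add]

end PartitionSeries

section Tail

variable {ι : Type*}

/-- The shift `f ↦ (f 1, f 2, …)`. -/
noncomputable def tail : (ℕ →₀ ℕ) →+ (ℕ →₀ ℕ) :=
  comapDomain.addMonoidHom (add_left_injective 1)

theorem tail_apply (f : ℕ →₀ ℕ) (i : ℕ) : tail f i = f (i + 1) := rfl

theorem single_add_mapDomain_tail (f : ℕ →₀ ℕ) :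
    single 0 (f 0) + mapDomain (· + 1) (tail f) = f := by
  rw [tail, mapDomain_comapDomain_nat_add_one, single_add_erase]

theorem degree_eq_add_degree_tail (f : ℕ →₀ ℕ) : degree f = f 0 + degree (tail f) := by
  conv_lhs => rw [← single_add_mapDomain_tail f]
  simp [degree_mapDomain]

theorem degree_tail_le (f : ℕ →₀ ℕ) : degree (tail f) ≤ degree f :=
  (degree_eq_add_degree_tail f).symm ▸ Nat.le_add_left _ _

theorem eq_of_tail_eq_of_degree_eq {f g : ℕ →₀ ℕ} (ht : tail f = tail g)
    (hd : degree f = degree g) : f = g := by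
  have hhead : f 0 = g 0 := by
    rwa [degree_eq_add_degree_tail f, degree_eq_add_degree_tail g, ht, add_left_inj] at hd
  rw [← single_add_mapDomain_tail f, ← single_add_mapDomain_tail g, hhead, ht]

theorem exists_tail_eq_and_degree_eq {f : ℕ →₀ ℕ} {d : ℕ} (h : degree f ≤ d) :
    ∃ g, tail g = f ∧ degree g = d := by
  refine ⟨single 0 (d - degree f) + mapDomain (· + 1) f, ?_, ?_⟩
  · ext i
    simp [tail_apply, mapDomain_apply (add_left_injective 1)]
  · rw [map_add, degree_single, degree_mapDomain, Nat.sub_add_cancel h]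

theorem weight_succ_tail (f : ℕ →₀ ℕ) : weight Nat.succ (tail f) = weight id f := by
  conv_rhs => rw [← single_add_mapDomain_tail f]
  rw [map_add, weight_single, id, smul_zero, zero_add]
  exact (linearCombination_mapDomain ℕ (v' := id) (· + 1) (tail f)).symm

theorem weight_add_left (w v : ι → ℕ) (f : ι →₀ ℕ) :
    weight (w + v) f = weight w f + weight v f := by
  simp [weight_apply, mul_add, Finsupp.sum_add]

theorem weight_succ (f : ℕ →₀ ℕ) : weight Nat.succ f = weight id f + degree f := by
  rw [degree_eq_weight_one, ← weight_add_left]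
  rfl

theorem weight_two_mul_add_one (f : ℕ →₀ ℕ) :
    weight (fun i => 2 * i + 1) f = weight id f + weight Nat.succ f := by
  rw [← weight_add_left]
  congr 2 with i
  simp only [Pi.add_apply, id, Nat.succ_eq_add_one]
  ring

theorem existsUnique_eq_add_tail (g : ℕ →₀ ℕ) : ∃! f : ℕ →₀ ℕ, f = g + tail f := by
  refine existsUnique_of_exists_of_unique ?_ fun f f' hf hf' => ?_
  · induction g using Finsupp.induction_linear with
    | zero => exact ⟨0, by simp⟩
    | add g g' hg hg' =>
      obtain ⟨f, hf⟩ := hg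
      obtain ⟨f', hf'⟩ := hg'
      exact ⟨f + f', by rw [map_add, add_add_add_comm, ← hf, ← hf']⟩
    | single j n =>
      refine ⟨Finsupp.indicator (Finset.range (j + 1)) fun _ _ => n, ?_⟩
      ext i
      simp only [Finsupp.add_apply, tail_apply, Finsupp.indicator_apply, single_apply,
        Finset.mem_range]
      grind
  · by_contra hne
    have hlast := Finset.max'_mem _ (nonempty_neLocus_iff.2 hne)
    set i := (f.neLocus f').max' (nonempty_neLocus_iff.2 hne)
    have hnext : i + 1 ∈ f.neLocus f' := by
      have hfi : f i = g i + f (i + 1) := DFunLike.congr_fun hf i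
      have hfi' : f' i = g i + f' (i + 1) := DFunLike.congr_fun hf' i
      rw [mem_neLocus] at hlast ⊢
      omega
    exact (Finset.le_max' _ _ hnext).not_gt (Nat.lt_succ_self i)

end Tail

section LengthExcess

/-- The weight of a pair of partitions in which the second has positive parts, while the first may
also have parts of size `0`. -/
noncomputable def pairWeight (p : (ℕ →₀ ℕ) × (ℕ →₀ ℕ)) : ℕ := weight id p.1 + weight Nat.succ p.2

/-- Pairs of partitions in which the first has `s` more parts than the second. -/
abbrev ExcessPair (s : ℕ) : Type := {p : (ℕ →₀ ℕ) × (ℕ →₀ ℕ) // degree p.1 = degree p.2 + s}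

/-- The generating series of `ExcessPair s` by `pairWeight`. -/
noncomputable def excessSeries (s : ℕ) : ℤ⟦X⟧ :=
  countingSeries fun p : ExcessPair s => pairWeight p.1

theorem excessSeries_eq_countingSeries_le (s : ℕ) :
    excessSeries s =
      countingSeries fun p : {p : (ℕ →₀ ℕ) × (ℕ →₀ ℕ) // degree p.1 ≤ degree p.2 + s} =>
        weight Nat.succ p.1.1 + weight Nat.succ p.1.2 := by
  have hmem (p : ExcessPair s) :
      degree (tail p.1.1) ≤ degree p.1.2 + s :=
    (degree_tail_le _).trans_eq p.2
  refine countingSeries_eq_of_bijective (f := fun p => ⟨(tail p.1.1, p.1.2), hmem p⟩)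
    ⟨?_, ?_⟩ fun p => by simp only [weight_succ_tail, pairWeight]
  · rintro ⟨⟨u, v⟩, huv⟩ ⟨⟨u', v'⟩, huv'⟩ h
    obtain ⟨htail, rfl⟩ : tail u = tail u' ∧ v = v' := by simpa using h
    obtain rfl := eq_of_tail_eq_of_degree_eq htail (huv.trans huv'.symm)
    rfl
  · rintro ⟨⟨f, v⟩, hfv⟩
    obtain ⟨u, rfl, hu⟩ := exists_tail_eq_and_degree_eq hfv
    exact ⟨⟨(u, v), hu⟩, rfl⟩

theorem X_pow_mul_excessSeries_succ (s : ℕ) :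
    X ^ (s + 1) * excessSeries (s + 1) =
      countingSeries fun p : {p : (ℕ →₀ ℕ) × (ℕ →₀ ℕ) // ¬ degree p.1 ≤ degree p.2 + s} =>
        weight Nat.succ p.1.1 + weight Nat.succ p.1.2 := by
  have hmem (p : ExcessPair (s + 1)) :
      ¬ degree p.1.1 ≤ degree (tail p.1.2) + s := by
    have := degree_tail_le p.1.2
    have := p.2
    omega
  rw [excessSeries, ← countingSeries_add_const]
  refine countingSeries_eq_of_bijective (f := fun p => ⟨(p.1.1, tail p.1.2), hmem p⟩)
    ⟨?_, ?_⟩ fun p => ?_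
  · rintro ⟨⟨u, v⟩, huv⟩ ⟨⟨u', v'⟩, huv'⟩ h
    obtain ⟨rfl, htail⟩ : u = u' ∧ tail v = tail v' := by simpa using h
    obtain rfl := eq_of_tail_eq_of_degree_eq htail (add_right_cancel (huv.symm.trans huv'))
    rfl
  · rintro ⟨⟨u, f⟩, huf⟩
    have hle : degree f ≤ degree u - (s + 1) := by grind
    obtain ⟨v, rfl, hv⟩ := exists_tail_eq_and_degree_eq hle
    exact ⟨⟨(u, v), by grind⟩, rfl⟩
  · have := p.2
    simp only [weight_succ_tail, pairWeight, weight_succ p.1.1, weight_succ p.1.2]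
    omega

theorem excessSeries_add_X_pow_mul (s : ℕ) :
    excessSeries s + X ^ (s + 1) * excessSeries (s + 1) =
      partitionSeries Nat.succ * partitionSeries Nat.succ := by
  rw [excessSeries_eq_countingSeries_le, X_pow_mul_excessSeries_succ,
    countingSeries_subtype_add_subtype_not (finiteFibers_weight_succ.prod finiteFibers_weight_succ)
      fun p : (ℕ →₀ ℕ) × (ℕ →₀ ℕ) => degree p.1 ≤ degree p.2 + s,
    countingSeries_prod finiteFibers_weight_succ finiteFibers_weight_succ]
  rfl

end LengthExcess

section Alpha

theorem eq_of_add_X_pow_mul_eq {R : Type*} [Ring R] {F G : ℕ → R⟦X⟧}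
    (h : ∀ s, F s + X ^ (s + 1) * F (s + 1) = G s + X ^ (s + 1) * G (s + 1)) : F = G := by
  have hcoeff (n : ℕ) : ∀ s, coeff n (F s) = coeff n (G s) := by
    induction n using Nat.strong_induction_on with
    | _ n ih =>
      intro s
      have hn := congrArg (coeff n) (h s)
      simp only [map_add, coeff_X_pow_mul'] at hn
      split_ifs at hn with hs
      · rwa [ih (n - (s + 1)) (by omega), add_left_inj] at hn
      · simpa using hn
  ext s n
  exact hcoeff n s

/-- The summand of index `ℓ` of `alphaBip s k`, with the argument `k` extended to the integers so
that the recurrence in `s` needs no lower bound on `k`. -/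
noncomputable def alphaTerm (s : ℕ) (k : ℤ) (ℓ : ℕ) : ℤ :=
  (-1) ^ ℓ * partitionCountInt (k - ℓ * (ℓ + 1) / 2 - ℓ * s)

theorem alphaTerm_zero (s : ℕ) (k : ℤ) : alphaTerm s k 0 = partitionCountInt k := by
  simp [alphaTerm]

theorem alphaTerm_eq_zero_of_lt {k : ℤ} {ℓ : ℕ} (s : ℕ) (h : k < ℓ) : alphaTerm s k ℓ = 0 := by
  have htri : (ℓ : ℤ) ≤ ℓ * (ℓ + 1) / 2 := by
    rw [Int.le_ediv_iff_mul_le two_pos]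
    rcases ℓ with _ | ℓ
    · simp
    · push_cast
      nlinarith
  have hneg : ¬ 0 ≤ k - ℓ * (ℓ + 1) / 2 - ℓ * s := by
    have : (0 : ℤ) ≤ ℓ * s := by positivity
    omega
  rw [alphaTerm, partitionCountInt, if_neg hneg, Nat.cast_zero, mul_zero]

theorem summable_alphaTerm (s : ℕ) (k : ℤ) : Summable (alphaTerm s k) :=
  summable_of_ne_finset_zero (s := Finset.range (k.toNat + 1)) fun ℓ hℓ =>
    alphaTerm_eq_zero_of_lt s (by grind)

theorem alphaTerm_succ (s : ℕ) (k : ℤ) (ℓ : ℕ) :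
    alphaTerm s k (ℓ + 1) = -alphaTerm (s + 1) (k - (s + 1)) ℓ := by
  have htri : ((ℓ + 1 : ℕ) : ℤ) * ((ℓ + 1 : ℕ) + 1) / 2 = ℓ * (ℓ + 1) / 2 + (ℓ + 1) := by
    rw [← Int.add_mul_ediv_right _ _ two_ne_zero]
    congr 1
    push_cast
    ring
  have harg : k - (ℓ * (ℓ + 1) / 2 + (ℓ + 1) : ℤ) - (ℓ + 1 : ℕ) * s =
      k - (s + 1) - ℓ * (ℓ + 1) / 2 - ℓ * (s + 1 : ℕ) := by
    push_cast
    ring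
  rw [alphaTerm, alphaTerm, htri, harg, pow_succ]
  ring

theorem tsum_alphaTerm_add (s : ℕ) (k : ℤ) :
    ∑' ℓ, alphaTerm s k ℓ + ∑' ℓ, alphaTerm (s + 1) (k - (s + 1)) ℓ = partitionCountInt k := by
  rw [(summable_alphaTerm s k).tsum_eq_zero_add]
  simp only [alphaTerm_zero, alphaTerm_succ, tsum_neg, neg_add_cancel_right]

theorem mk_alphaBip_add_X_pow_mul (s : ℕ) :
    PowerSeries.mk (alphaBip s) + X ^ (s + 1) * PowerSeries.mk (alphaBip (s + 1)) =
      partitionSeries Nat.succ := by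
  rw [← mk_partitionCount]
  ext n
  have hrec := tsum_alphaTerm_add s n
  rw [partitionCountInt, if_pos n.cast_nonneg, Int.toNat_natCast] at hrec
  rw [map_add, coeff_X_pow_mul', coeff_mk, coeff_mk, coeff_mk, ← hrec]
  congr 1
  split_ifs with h
  · rw [alphaBip]
    push_cast [Nat.cast_sub h]
    rfl
  · have hzero (ℓ : ℕ) : alphaTerm (s + 1) (n - (s + 1)) ℓ = 0 :=
      alphaTerm_eq_zero_of_lt _ (by omega)
    simp only [hzero, tsum_zero]

theorem excessSeries_eq_mul_mk_alphaBip (s : ℕ) :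
    excessSeries s = partitionSeries Nat.succ * PowerSeries.mk (alphaBip s) := by
  refine congrFun (eq_of_add_X_pow_mul_eq
    (G := fun s => partitionSeries Nat.succ * PowerSeries.mk (alphaBip s)) fun s => ?_) s
  rw [excessSeries_add_X_pow_mul, mul_left_comm, ← mul_add, mk_alphaBip_add_X_pow_mul]

end Alpha

section Lattice

variable {ι : Type*}

theorem inf_add_tsub_left (a b : ι →₀ ℕ) : a ⊓ b + (a - b) = a := by
  ext i
  simp only [Finsupp.add_apply, Finsupp.inf_apply, Finsupp.tsub_apply]
  omega

theorem inf_add_tsub_right (a b : ι →₀ ℕ) : a ⊓ b + (b - a) = b := by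
  rw [inf_comm, inf_add_tsub_left]

theorem inf_add_tsub_add_tsub (a b : ι →₀ ℕ) : a ⊓ b + (a - b) + (b - a) = a ⊔ b := by
  ext i
  simp only [Finsupp.add_apply, Finsupp.inf_apply, Finsupp.sup_apply, Finsupp.tsub_apply]
  omega

theorem tsub_inf_tsub (a b : ι →₀ ℕ) : (a - b) ⊓ (b - a) = 0 := by
  ext i
  simp only [Finsupp.inf_apply, Finsupp.tsub_apply, Finsupp.zero_apply]
  omega

theorem tsub_eq_self_of_inf_eq_zero {x y : ι →₀ ℕ} (h : x ⊓ y = 0) : x - y = x := by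
  simpa only [h, zero_add] using inf_add_tsub_left x y

theorem add_inf_add_of_inf_eq_zero {x y : ι →₀ ℕ} (h : x ⊓ y = 0) (t : ι →₀ ℕ) :
    (t + x) ⊓ (t + y) = t := by
  have hadd := inf_add_tsub_left (t + x) (t + y)
  rw [add_tsub_add_eq_tsub_left, tsub_eq_self_of_inf_eq_zero h] at hadd
  exact add_right_cancel hadd

end Lattice

section DisjointPair

/-- The members of `ExcessPair s` whose two partitions have no common part index. -/
abbrev DisjointPair (s : ℕ) : Type :=
  {p : (ℕ →₀ ℕ) × (ℕ →₀ ℕ) // p.1 ⊓ p.2 = 0 ∧ degree p.1 = degree p.2 + s}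

/-- The generating series of `DisjointPair s` by `pairWeight`. -/
noncomputable def disjointSeries (s : ℕ) : ℤ⟦X⟧ :=
  countingSeries fun p : DisjointPair s => pairWeight p.1

theorem finiteFibers_pairWeight_disjointPair (s : ℕ) :
    FiniteFibers fun p : DisjointPair s => pairWeight p.1 := by
  refine (finiteFibers_weight_succ.prod finiteFibers_weight_succ).of_injective_of_le
    Subtype.val_injective (B := fun n => 2 * n + s) fun p => ?_
  have := p.2.2
  rw [pairWeight, weight_succ p.1.1, weight_succ p.1.2]
  omega

/-- Removes the common parts of a pair of partitions. -/
noncomputable def cancel {s : ℕ} (p : ExcessPair s) : DisjointPair s :=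
  ⟨(p.1.1 - p.1.2, p.1.2 - p.1.1), tsub_inf_tsub _ _, by
    have hfst := congrArg degree (inf_add_tsub_left p.1.1 p.1.2)
    have hsnd := congrArg degree (inf_add_tsub_right p.1.1 p.1.2)
    have hdegree := p.2
    rw [map_add] at hfst hsnd
    dsimp only
    omega⟩

theorem eq_of_inf_eq_of_cancel_eq {s : ℕ} {p q : ExcessPair s}
    (hinf : p.1.1 ⊓ p.1.2 = q.1.1 ⊓ q.1.2) (hcancel : cancel p = cancel q) : p = q := by
  obtain ⟨h₁, h₂⟩ := Prod.ext_iff.1 (congrArg Subtype.val hcancel)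
  refine Subtype.ext (Prod.ext ?_ ?_)
  · rw [← inf_add_tsub_left p.1.1 p.1.2, ← inf_add_tsub_left q.1.1 q.1.2, hinf]
    exact congrArg _ h₁
  · rw [← inf_add_tsub_right p.1.1 p.1.2, ← inf_add_tsub_right q.1.1 q.1.2, hinf]
    exact congrArg _ h₂

theorem exists_inf_eq_and_cancel_eq {s : ℕ} (t : ℕ →₀ ℕ) (q : DisjointPair s) :
    ∃ p : ExcessPair s, p.1.1 ⊓ p.1.2 = t ∧ cancel p = q := by
  obtain ⟨⟨x, y⟩, hxy, hdegree⟩ := q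
  refine ⟨⟨(t + x, t + y), ?_⟩, add_inf_add_of_inf_eq_zero hxy t, Subtype.ext (Prod.ext ?_ ?_)⟩
  · simp only [map_add, hdegree, add_assoc]
  · exact (add_tsub_add_eq_tsub_left t x y).trans (tsub_eq_self_of_inf_eq_zero hxy)
  · exact (add_tsub_add_eq_tsub_left t y x).trans
      (tsub_eq_self_of_inf_eq_zero (inf_comm x y ▸ hxy))

theorem excessSeries_eq_mul_disjointSeries (s : ℕ) :
    excessSeries s = partitionSeries (fun i => 2 * i + 1) * disjointSeries s := by
  rw [partitionSeries, disjointSeries,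
    ← countingSeries_prod (finiteFibers_weight (by grind)) (finiteFibers_pairWeight_disjointPair s)]
  refine countingSeries_eq_of_bijective (f := fun p => (p.1.1 ⊓ p.1.2, cancel p)) ⟨?_, ?_⟩ ?_
  · intro p q h
    exact eq_of_inf_eq_of_cancel_eq (Prod.ext_iff.1 h).1 (Prod.ext_iff.1 h).2
  · rintro ⟨t, q⟩
    obtain ⟨p, hinf, hcancel⟩ := exists_inf_eq_and_cancel_eq t q
    exact ⟨p, Prod.ext hinf hcancel⟩
  · intro p
    have h₁ := congrArg (weight id) (inf_add_tsub_left p.1.1 p.1.2)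
    have h₂ := congrArg (weight Nat.succ) (inf_add_tsub_right p.1.1 p.1.2)
    rw [map_add] at h₁ h₂
    simp only [weight_two_mul_add_one, pairWeight, cancel]
    omega

end DisjointPair

section SteadyPair

/-- Pairs of partitions with steadily decreasing parts, of sizes differing by `s`. Here a partition
is encoded by its sequence of parts, so that its size is `Finsupp.degree`. -/
abbrev SteadyPair (s : ℕ) : Type := {p : ExcessPair s // SteadilyDecreasing p.1.1 p.1.2}

theorem steadilyDecreasing_iff_tail_sup_le_inf (a b : ℕ →₀ ℕ) :
    SteadilyDecreasing a b ↔ tail (a ⊔ b) ≤ a ⊓ b := Iff.rfl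

/-- The excess of each smaller part over the next larger part; steadily decreasing parts make
this truncated subtraction exact. -/
noncomputable def gap (a b : ℕ →₀ ℕ) : ℕ →₀ ℕ := a ⊓ b - tail (a ⊔ b)

theorem gap_add_tail_sup {a b : ℕ →₀ ℕ} (h : SteadilyDecreasing a b) :
    gap a b + tail (a ⊔ b) = a ⊓ b :=
  tsub_add_cancel_of_le ((steadilyDecreasing_iff_tail_sup_le_inf a b).1 h)

theorem sup_eq_add_tail_sup {a b : ℕ →₀ ℕ} (h : SteadilyDecreasing a b) :
    a ⊔ b = gap a b + (a - b) + (b - a) + tail (a ⊔ b) := by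
  conv_lhs => rw [← inf_add_tsub_add_tsub, ← gap_add_tail_sup h]
  ac_rfl

theorem degree_eq_weight_gap_add_pairWeight_cancel {s : ℕ} (p : SteadyPair s) :
    degree p.1.1.2 = weight Nat.succ (gap p.1.1.1 p.1.1.2) + pairWeight (cancel p.1).1 := by
  obtain ⟨⟨⟨a, b⟩, _⟩, h⟩ := p
  replace h : SteadilyDecreasing a b := h
  have hinf := congrArg (weight Nat.succ) (gap_add_tail_sup h)
  have hsup := congrArg (weight id) (inf_add_tsub_add_tsub a b)
  have hsnd := congrArg degree (inf_add_tsub_right a b)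
  rw [map_add, weight_succ_tail, weight_succ (a ⊓ b)] at hinf
  rw [map_add, map_add] at hsup
  rw [map_add] at hsnd
  simp only [pairWeight, cancel, weight_succ (b - a)]
  omega

theorem injective_gap_cancel (s : ℕ) :
    Function.Injective fun p : SteadyPair s => (gap p.1.1.1 p.1.1.2, cancel p.1) := by
  intro p q hpq
  obtain ⟨hgap, hcancel⟩ : gap p.1.1.1 p.1.1.2 = gap q.1.1.1 q.1.1.2 ∧ cancel p.1 = cancel q.1 :=
    Prod.ext_iff.1 hpq
  obtain ⟨h₁, h₂⟩ : p.1.1.1 - p.1.1.2 = q.1.1.1 - q.1.1.2 ∧ p.1.1.2 - p.1.1.1 = q.1.1.2 - q.1.1.1 :=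
    Prod.ext_iff.1 (congrArg Subtype.val hcancel)
  have hsup : p.1.1.1 ⊔ p.1.1.2 = q.1.1.1 ⊔ q.1.1.2 :=
    (existsUnique_eq_add_tail _).unique (sup_eq_add_tail_sup p.2)
      (by simpa only [hgap, h₁, h₂] using sup_eq_add_tail_sup q.2)
  refine Subtype.ext (eq_of_inf_eq_of_cancel_eq ?_ hcancel)
  rw [← gap_add_tail_sup p.2, ← gap_add_tail_sup q.2, hgap, hsup]

theorem surjective_gap_cancel (s : ℕ) :
    Function.Surjective fun p : SteadyPair s => (gap p.1.1.1 p.1.1.2, cancel p.1) := by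
  rintro ⟨g, q⟩
  obtain ⟨f, hf, -⟩ := existsUnique_eq_add_tail (g + q.1.1 + q.1.2)
  obtain ⟨p, hinf, rfl⟩ := exists_inf_eq_and_cancel_eq (g + tail f) q
  have hsup : p.1.1 ⊔ p.1.2 = f := by
    rw [← inf_add_tsub_add_tsub, hinf]
    conv_rhs => rw [hf]
    simp only [cancel]
    ac_rfl
  have hsteady : SteadilyDecreasing p.1.1 p.1.2 := by
    rw [steadilyDecreasing_iff_tail_sup_le_inf, hsup, hinf]
    exact le_add_self
  refine ⟨⟨p, hsteady⟩, Prod.ext ?_ rfl⟩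
  simp only [gap, hsup, hinf, add_tsub_cancel_right]

theorem succ_le_of_steadilyDecreasing {a b : ℕ → ℕ} (h : SteadilyDecreasing a b) (i : ℕ) :
    a (i + 1) ≤ a i ∧ b (i + 1) ≤ b i :=
  ⟨(le_max_left _ _).trans ((h i).trans (min_le_left _ _)),
    (le_max_right _ _).trans ((h i).trans (min_le_right _ _))⟩

theorem mk_bipartitePi_eq_countingSeries (s : ℕ) :
    PowerSeries.mk (fun n => (bipartitePi (n + s) n : ℤ)) =
      countingSeries fun p : SteadyPair s => degree p.1.1.2 := by
  ext n
  simp only [coeff_mk, countingSeries, bipartitePi]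
  exact congrArg _ (Nat.card_congr
    { toFun p := ⟨⟨⟨p.1, p.2.2.2.2.1.trans (congrArg (· + s) p.2.2.2.2.2.symm)⟩, p.2.2.2.1⟩,
        p.2.2.2.2.2⟩
      invFun q := ⟨q.1.1.1, fun i => (succ_le_of_steadilyDecreasing q.1.2 i).1,
        fun i => (succ_le_of_steadilyDecreasing q.1.2 i).2, q.1.2,
        q.1.1.2.trans (congrArg (· + s) q.2), q.2⟩ })

theorem mk_bipartitePi_eq_mul_disjointSeries (s : ℕ) :
    PowerSeries.mk (fun n => (bipartitePi (n + s) n : ℤ)) =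
      partitionSeries Nat.succ * disjointSeries s := by
  rw [mk_bipartitePi_eq_countingSeries, partitionSeries, disjointSeries, ← countingSeries_prod
    finiteFibers_weight_succ (finiteFibers_pairWeight_disjointPair s)]
  exact countingSeries_eq_of_bijective ⟨injective_gap_cancel s, surjective_gap_cancel s⟩
    fun p => (degree_eq_weight_gap_add_pairWeight_cancel p).symm

end SteadyPair

theorem mk_bipartitePi_eq_mul_mk_cubicPartition (s : ℕ) :
    PowerSeries.mk (fun n => (bipartitePi (n + s) n : ℤ)) =
      PowerSeries.mk (alphaBip s) * PowerSeries.mk (fun n => (cubicPartition n : ℤ)) := by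
  let E : ℤ⟦X⟧ := partitionSeries fun i => 2 * (i + 1)
  calc
    _ = partitionSeries Nat.succ * disjointSeries s := mk_bipartitePi_eq_mul_disjointSeries s
    _ = E * excessSeries s := by
      rw [partitionSeries_succ, excessSeries_eq_mul_disjointSeries, mul_left_comm, mul_assoc]
    _ = PowerSeries.mk (alphaBip s) * (partitionSeries Nat.succ * E) := by
      rw [excessSeries_eq_mul_mk_alphaBip]
      ring
    _ = _ := by rw [mk_cubicPartition]

end BipartitePartition

/-- for `m ≥ n ≥ 0`, `π(m,n) = Σ_{0 ≤ k ≤ n} c(n-k) · α(m-n, k)`. -/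
theorem bipartitePi_eq_sum_of_le (m n : ℕ) (h : n ≤ m) :
    (bipartitePi m n : ℤ) =
      ∑ k ∈ Finset.range (n + 1), (cubicPartition (n - k) : ℤ) * alphaBip (m - n) k := by
  obtain ⟨s, rfl⟩ := Nat.exists_eq_add_of_le h
  have hcoeff := congrArg (PowerSeries.coeff n)
    (BipartitePartition.mk_bipartitePi_eq_mul_mk_cubicPartition s)
  rw [PowerSeries.coeff_mul, Finset.Nat.sum_antidiagonal_eq_sum_range_succ_mk] at hcoeff
  simpa only [PowerSeries.coeff_mk, Nat.add_sub_cancel_left, mul_comm] using hcoeff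
end
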